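/- arXiv:2205.04965 — 2 statements merged into one kernel-verified Lean document; each statement's English description precedes it below -/
import Mathlib

section
/- Let p, q, p′, q′ be pure unit quaternions with ⟪p, p′⟫ = 0 and ⟪q, q′⟫ = 0. Then K_p^q ∩ K_{p′}^{q′} ≠ ∅; that is, there exists a unit quaternion x with (conj x) * p * x = q and (conj x) * p′ * x = q′ (a rotation of S² mapping p to q and p′ to q′ simultaneously). -/
open Quaternion RealInnerProductSpace

/-- The great circle `K_p^q`: the set of unit quaternions `x` with
`(conj x) * p * x = q`. -/
def K (p q : Quaternion ℝ) : Set (Quaternion ℝ) :=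
  {x : Quaternion ℝ | ‖x‖ = 1 ∧ star x * p * x = q}

theorem aux_key (p q p' q' : Quaternion ℝ)
    (hp : p * p = -1) (hq : q * q = -1) (hp' : p' * p' = -1) (hq' : q' * q' = -1)
    (hpp : p * p' = -(p' * p)) (hqq : q * q' = -(q' * q)) (a : Quaternion ℝ) :
    p * (a - p * a * q - p' * a * q' + p * p' * a * q' * q)
      = (a - p * a * q - p' * a * q' + p * p' * a * q' * q) * q ∧
    p' * (a - p * a * q - p' * a * q' + p * p' * a * q' * q)
      = (a - p * a * q - p' * a * q' + p * p' * a * q' * q) * q' := by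
  have e1 : ∀ b, p * (p * b) = -b := fun b => by rw [← mul_assoc, hp]; simp
  have e2 : ∀ b, p' * (p' * b) = -b := fun b => by rw [← mul_assoc, hp']; simp
  have e3 : ∀ b, p' * (p * b) = -(p * (p' * b)) := fun b => by
    rw [← mul_assoc, ← mul_assoc, hpp]; simp
  have e4 : q * q' = -(q' * q) := hqq
  have e5 : q' * (q' * q) = -q := by rw [← mul_assoc, hq']; simp
  constructor
  · simp only [mul_add, mul_sub, add_mul, sub_mul, mul_assoc, e1, hq, mul_neg, mul_one]
    abel
  · simp only [mul_add, mul_sub, add_mul, sub_mul, mul_assoc, e2, e3, hq', e5, e4, mul_neg, mul_one]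
    abel

theorem aux_sq (p : Quaternion ℝ) (hp : p.re = 0) (hn : ‖p‖ = 1) : p * p = -1 := by
  have h : star p = -p := by ext <;> simp [hp]
  have h2 := Quaternion.self_mul_star p
  rw [h, Quaternion.normSq_eq_norm_mul_self, hn] at h2
  simp at h2
  rw [← h2]; simp

theorem aux_anti (p q : Quaternion ℝ) (hp : p.re = 0) (hq : q.re = 0) (h : ⟪p, q⟫ = 0) :
    p * q = -(q * p) := by
  rw [Quaternion.inner_def] at h
  simp [hp, hq] at h
  ext <;> simp [hp, hq] <;> linarith

/-- A quaternion with prescribed components. -/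
def mkQ (a b c d : ℝ) : Quaternion ℝ := ⟨a, b, c, d⟩

theorem mkQ_re (a b c d : ℝ) : (mkQ a b c d).re = a := rfl
theorem mkQ_imI (a b c d : ℝ) : (mkQ a b c d).imI = b := rfl
theorem mkQ_imJ (a b c d : ℝ) : (mkQ a b c d).imJ = c := rfl
theorem mkQ_imK (a b c d : ℝ) : (mkQ a b c d).imK = d := rfl

theorem aux_trace (a b : Quaternion ℝ) (ha : a.re = 0) (hb : b.re = 0) :
    (a * 1 * b).re + (a * mkQ 0 1 0 0 * b).imI + (a * mkQ 0 0 1 0 * b).imJ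
      + (a * mkQ 0 0 0 1 * b).imK = 0 := by
  simp [ha, hb, mkQ_re, mkQ_imI, mkQ_imJ, mkQ_imK]; try ring

theorem statement8 (p q p' q' : Quaternion ℝ)
    (hp : p.re = 0) (hpn : ‖p‖ = 1) (hq : q.re = 0) (hqn : ‖q‖ = 1)
    (hp' : p'.re = 0) (hpn' : ‖p'‖ = 1) (hq' : q'.re = 0) (hqn' : ‖q'‖ = 1)
    (hpp' : ⟪p, p'⟫ = 0) (hqq' : ⟪q, q'⟫ = 0) :
    ∃ x : Quaternion ℝ, ‖x‖ = 1 ∧ star x * p * x = q ∧ star x * p' * x = q' := by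
  have key := aux_key p q p' q' (aux_sq p hp hpn) (aux_sq q hq hqn) (aux_sq p' hp' hpn')
    (aux_sq q' hq' hqn') (aux_anti p p' hp hp' hpp') (aux_anti q q' hq hq' hqq')
  obtain ⟨x, hx0, h1, h2⟩ : ∃ x : Quaternion ℝ, x ≠ 0 ∧ p * x = x * q ∧ p' * x = x * q' := by
    by_contra! hcon
    have hz : ∀ a, a - p * a * q - p' * a * q' + (p * p') * a * (q' * q) = 0 := by
      intro a
      by_contra hne
      rw [← mul_assoc] at hne
      exact hcon _ hne (key a).1 (key a).2
    have r1 : (p * p').re = 0 := by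
      rw [Quaternion.inner_def] at hpp'
      simp [hp, hp'] at hpp' ⊢
      linarith
    have r2 : (q' * q).re = 0 := by
      rw [Quaternion.inner_def] at hqq'
      simp [hq, hq'] at hqq' ⊢
      linarith
    have t1 := aux_trace p q hp hq
    have t2 := aux_trace p' q' hp' hq'
    have t3 := aux_trace (p * p') (q' * q) r1 r2
    have z1 := congrArg (fun z : Quaternion ℝ => z.re) (hz 1)
    have z2 := congrArg (fun z : Quaternion ℝ => z.imI) (hz (mkQ 0 1 0 0))
    have z3 := congrArg (fun z : Quaternion ℝ => z.imJ) (hz (mkQ 0 0 1 0))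
    have z4 := congrArg (fun z : Quaternion ℝ => z.imK) (hz (mkQ 0 0 0 1))
    simp only [Quaternion.re_add, Quaternion.re_sub, Quaternion.re_one, Quaternion.re_zero] at z1
    simp only [Quaternion.imI_add, Quaternion.imI_sub, Quaternion.imI_zero, mkQ_imI] at z2
    simp only [Quaternion.imJ_add, Quaternion.imJ_sub, Quaternion.imJ_zero, mkQ_imJ] at z3
    simp only [Quaternion.imK_add, Quaternion.imK_sub, Quaternion.imK_zero, mkQ_imK] at z4
    linarith
  have hn : ‖x‖ ≠ 0 := norm_ne_zero_iff.mpr hx0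
  have hu : ‖(‖x‖⁻¹ : ℝ) • x‖ = 1 := by
    rw [norm_smul, norm_inv, norm_norm, inv_mul_cancel₀ hn]
  have hs : star ((‖x‖⁻¹ : ℝ) • x) * ((‖x‖⁻¹ : ℝ) • x) = 1 := by
    rw [Quaternion.star_mul_self, Quaternion.normSq_eq_norm_mul_self, hu]; simp
  refine ⟨(‖x‖⁻¹ : ℝ) • x, hu, ?_, ?_⟩
  · rw [mul_assoc, mul_smul_comm, h1, ← smul_mul_assoc, ← mul_assoc, hs, one_mul]
  · rw [mul_assoc, mul_smul_comm, h2, ← smul_mul_assoc, ← mul_assoc, hs, one_mul]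
end

section
/- Let q₀ be a pure unit quaternion and l, r unit quaternions. The rotation x ↦ (conj l) * x * r maps the left Hopf bundle ℋ^{q₀} onto itself — i.e., for every pure unit quaternion p there is a pure unit quaternion p′ with { (conj l) * x * r : x ∈ K_p^{q₀} } = K_{p′}^{q₀} — if and only if (conj r) * q₀ * r = q₀ or (conj r) * q₀ * r = −q₀. -/
open Quaternion

theorem aux_mul_star (x : Quaternion ℝ) (h : ‖x‖ = 1) : x * star x = 1 := by
  rw [Quaternion.self_mul_star, Quaternion.normSq_eq_norm_mul_self, h]; simp

theorem aux_star_mul (x : Quaternion ℝ) (h : ‖x‖ = 1) : star x * x = 1 := by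
  rw [Quaternion.star_mul_self, Quaternion.normSq_eq_norm_mul_self, h]; simp

theorem aux_image (p q l r : Quaternion ℝ) (hl : ‖l‖ = 1) (hr : ‖r‖ = 1) :
    (fun x : Quaternion ℝ => star l * x * r) '' K p q =
      K (star l * p * l) (star r * q * r) := by
  have l1 := aux_mul_star l hl
  have l2 := aux_star_mul l hl
  have r1 := aux_mul_star r hr
  have r2 := aux_star_mul r hr
  ext y
  constructor
  · rintro ⟨x, ⟨hx, hx2⟩, rfl⟩
    refine ⟨by simp [norm_mul, hx, hl, hr], ?_⟩
    simp only [star_mul, star_star]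
    calc star r * (star x * l) * (star l * p * l) * (star l * x * r)
        = star r * (star x * (l * star l) * p * (l * star l) * x) * r := by
          simp only [mul_assoc]
      _ = star r * q * r := by rw [l1, mul_one, mul_one, hx2]
  · rintro ⟨hy, hy2⟩
    refine ⟨l * y * star r, ⟨by simp [norm_mul, hy, hl, hr], ?_⟩, ?_⟩
    · simp only [star_mul, star_star]
      calc r * (star y * star l) * p * (l * y * star r)
          = r * (star y * (star l * p * l) * y) * star r := by simp only [mul_assoc]
        _ = (r * star r) * q * (r * star r) := by rw [hy2]; simp only [mul_assoc]
        _ = q := by rw [r1]; simp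
    · show star l * (l * y * star r) * r = y
      calc star l * (l * y * star r) * r = (star l * l) * y * (star r * r) := by
            simp only [mul_assoc]
        _ = y := by rw [l2, r2]; simp

theorem aux_re (p l : Quaternion ℝ) (hp : p.re = 0) : (star l * p * l).re = 0 := by
  simp [hp]; ring

theorem statement11 (q₀ l r : Quaternion ℝ)
    (hq : q₀.re = 0) (hqn : ‖q₀‖ = 1) (hl : ‖l‖ = 1) (hr : ‖r‖ = 1) :
    (∀ p : Quaternion ℝ, p.re = 0 → ‖p‖ = 1 →
      ∃ p' : Quaternion ℝ, p'.re = 0 ∧ ‖p'‖ = 1 ∧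
        (fun x : Quaternion ℝ => star l * x * r) '' K p q₀ = K p' q₀) ↔
    (star r * q₀ * r = q₀ ∨ star r * q₀ * r = -q₀) := by
  have r1 := aux_mul_star r hr
  have r2 := aux_star_mul r hr
  have hs : star q₀ = -q₀ := by ext <;> simp [hq]
  have hsq : q₀ * q₀ = -1 := by
    have := aux_mul_star q₀ hqn
    rw [hs, mul_neg] at this
    rw [← this, neg_neg]
  constructor
  · intro h
    obtain ⟨p', -, -, he⟩ := h q₀ hq hqn
    have m1 : star l * 1 * r ∈ K p' q₀ := by
      rw [← he]; exact ⟨1, ⟨by simp, by simp⟩, rfl⟩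
    have m2 : star l * q₀ * r ∈ K p' q₀ := by
      rw [← he]
      exact ⟨q₀, ⟨hqn, by rw [aux_star_mul q₀ hqn, one_mul]⟩, rfl⟩
    have e1 := m1.2
    have e2 := m2.2
    simp only [star_mul, star_star, hs, mul_one] at e1 e2
    set P := l * p' * star l with hP
    have f1 : star r * P * r = q₀ := by
      rw [← e1, hP]; simp [mul_assoc]
    have f2 : star r * (-q₀ * P * q₀) * r = q₀ := by
      rw [hP]; refine Eq.trans ?_ e2; simp only [mul_assoc]
    have canc : ∀ a : Quaternion ℝ, star r * a * r = q₀ → a = r * q₀ * star r := by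
      intro a ha
      rw [← ha]
      calc a = (r * star r) * a * (r * star r) := by rw [r1]; simp
        _ = _ := by simp only [mul_assoc]
    have g1 := canc _ f1
    have g2 := canc _ f2
    have hPP : P * P = -1 := by
      rw [g1]
      calc r * q₀ * star r * (r * q₀ * star r) = r * (q₀ * (star r * r) * q₀) * star r := by
            simp only [mul_assoc]
        _ = -1 := by rw [r2, mul_one, hsq]; simp [r1]
    have hc : P * q₀ = q₀ * P := by
      have h3 : -q₀ * P * q₀ = P := g2.trans g1.symm
      calc P * q₀ = -((q₀ * q₀) * P * q₀) := by rw [hsq]; simp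
        _ = q₀ * (-q₀ * P * q₀) := by simp [mul_assoc]
        _ = q₀ * P := by rw [h3]
    have hz : (P - q₀) * (P + q₀) = 0 := by
      rw [sub_mul, mul_add, mul_add, hPP, hsq, hc]; abel
    rcases mul_eq_zero.mp hz with h0 | h0
    · left
      rw [← sub_eq_zero.mp h0]; rw [f1, sub_eq_zero.mp h0]
    · right
      have h5 : P = -q₀ := eq_neg_of_add_eq_zero_left h0
      rw [h5] at f1
      rw [mul_neg, neg_mul] at f1
      exact neg_eq_iff_eq_neg.mp f1
  · intro h p hp hpn
    have hn : ‖star l * p * l‖ = 1 := by simp [norm_mul, hl, hpn]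
    have hre := aux_re p l hp
    rcases h with h | h
    · exact ⟨star l * p * l, hre, hn, by rw [aux_image _ _ _ _ hl hr, h]⟩
    · refine ⟨-(star l * p * l), by rw [Quaternion.re_neg, hre, neg_zero],
        by rw [norm_neg, hn], ?_⟩
      rw [aux_image _ _ _ _ hl hr, h]
      ext y
      simp only [K, Set.mem_setOf_eq, mul_neg, neg_mul, neg_eq_iff_eq_neg]
end
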